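/- Let r, s ∈ 𝕀 be 𝕀-primitive admissible icosians with r𝕀 = s𝕀 (equality of right ideals). Then they determine the same coincidence site lattice: L ∩ (1/|r r̃|)·rLr̃ = L ∩ (1/|s s̃|)·sLs̃. -/

import Mathlib

/-!
The lattice `L` is the set of icosians fixed by the twist map (`mem_Lsub_iff`), and the twist map is
an involutive anti-automorphism of `ℍ(K)` that preserves `𝕀`. If `r𝕀 = s𝕀` with `s ≠ 0`, then
`r = sε` with `ε` a unit of `𝕀`. Now `|q|²|q̃|²` is the field norm of the reduced norm `|q|² ∈ 𝔬`,
hence a rational integer for every icosian `q`; being multiplicative and nonnegative, it equals `1`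
on units, so `|ε ε̃| = 1` (`norm_mul_twist_of_unit`). For `x ∈ L` the element `ε x ε̃` is again a
twist-fixed icosian, i.e. lies in `L`, and
`r x r̃ / |r r̃| = s (ε x ε̃) s̃ / |s s̃|`. This gives one inclusion, and the other follows by symmetry.
-/

noncomputable section

open Quaternion

/-- Hamilton's quaternion algebra over `ℝ`. -/
abbrev HR := Quaternion ℝ

/-- the golden ratio `τ = (1+√5)/2`. -/
def tau : ℝ := (1 + Real.sqrt 5) / 2

/-- membership in the quadratic field `K = ℚ(√5)`, viewed inside `ℝ`. -/
def inK (x : ℝ) : Prop := ∃ q r : ℚ, x = (q : ℝ) + (r : ℝ) * Real.sqrt 5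

/-- membership in the ring of integers `𝔬 = ℤ[τ]` of `K`, viewed inside `ℝ`. -/
def inO (x : ℝ) : Prop := ∃ m n : ℤ, x = (m : ℝ) + (n : ℝ) * tau

/-- membership in `ℍ(K)`: all four components lie in `K`. -/
def inHK (q : HR) : Prop := inK q.re ∧ inK q.imI ∧ inK q.imJ ∧ inK q.imK

open scoped Classical in
/-- Galois conjugation `′` on `K = ℚ(√5)`, sending `q + r√5` to `q - r√5`
(extended by the identity off `K`; on `K` this is the usual Galois conjugation,
since the representation `x = q + r√5` with `q, r ∈ ℚ` is unique). -/
noncomputable def gal (x : ℝ) : ℝ :=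
  if h : ∃ q r : ℚ, x = (q : ℝ) + (r : ℝ) * Real.sqrt 5 then
    ((h.choose : ℝ) - (h.choose_spec.choose : ℝ) * Real.sqrt 5)
  else x

/-- the twist map `q = (a,b,c,d) ↦ q̃ = (a′,b′,d′,c′)` on `ℍ(K)`. -/
def twist (q : HR) : HR := ⟨gal q.re, gal q.imI, gal q.imK, gal q.imJ⟩

def v₁ : HR := ⟨1, 0, 0, 0⟩
def v₂ : HR := ⟨0, 1, 0, 0⟩
def v₃ : HR := ⟨1/2, 1/2, 1/2, 1/2⟩
def v₄ : HR := ⟨(1 - tau)/2, tau/2, 0, 1/2⟩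

/-- membership in the icosian ring `𝕀`: the `𝔬`-span of
`(1,0,0,0)`, `(0,1,0,0)`, `½(1,1,1,1)`, `½(1−τ,τ,0,1)`. -/
def inIcosian (q : HR) : Prop :=
  ∃ a b c d : ℝ, inO a ∧ inO b ∧ inO c ∧ inO d ∧
    q = a • v₁ + b • v₂ + c • v₃ + d • v₄

def w₁ : HR := ⟨1, 0, 0, 0⟩
def w₂ : HR := ⟨-(1/2), 1/2, 1/2, 1/2⟩
def w₃ : HR := ⟨0, -1, 0, 0⟩
def w₄ : HR := ⟨0, 1/2, (tau - 1)/2, -(tau/2)⟩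

/-- the lattice `L` (a copy of the root lattice `A₄`): the `ℤ`-span of
`(1,0,0,0)`, `½(−1,1,1,1)`, `(0,−1,0,0)`, `½(0,1,τ−1,−τ)`. -/
def Lsub : AddSubgroup HR :=
  (Submodule.span ℤ ({w₁, w₂, w₃, w₄} : Set HR)).toAddSubgroup

/-- `Λ` is a similar sublattice (SSL) of `L`: `Λ = α R(L) ⊆ L` for some
`α > 0` and a linear isometry `R` of `ℍ ≅ ℝ⁴`. -/
def IsSSL (Λ : AddSubgroup HR) : Prop :=
  ∃ (α : ℝ) (R : HR ≃ₗᵢ[ℝ] HR), 0 < α ∧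
    (Λ : Set HR) = (fun x => α • R x) '' (Lsub : Set HR) ∧ Λ ≤ Lsub

/-- `p` is an `𝕀`-primitive icosian: `p ∈ 𝕀` and whenever `α ∈ K` with
`α p ∈ 𝕀`, one has `α ∈ 𝔬`. -/
def IPrimitive (p : HR) : Prop :=
  inIcosian p ∧ ∀ α : ℝ, inK α → inIcosian (α • p) → inO α

/-- an icosian `q` is admissible when `|q q̃|` is a rational integer. -/
def Admissible (q : HR) : Prop := ∃ n : ℤ, ‖q * twist q‖ = (n : ℝ)

lemma inO_add {x y : ℝ} (hx : inO x) (hy : inO y) : inO (x + y) := by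
  obtain ⟨m, n, rfl⟩ := hx; obtain ⟨m', n', rfl⟩ := hy
  exact ⟨m + m', n + n', by push_cast; ring⟩

lemma inO_neg {x : ℝ} (hx : inO x) : inO (-x) := by
  obtain ⟨m, n, rfl⟩ := hx
  exact ⟨-m, -n, by push_cast; ring⟩

/-- the icosian ring `𝕀` as an additive subgroup of `ℍ`. -/
def Isub : AddSubgroup HR where
  carrier := {q | inIcosian q}
  zero_mem' := ⟨0, 0, 0, 0, ⟨0, 0, by push_cast; ring⟩, ⟨0, 0, by push_cast; ring⟩,
    ⟨0, 0, by push_cast; ring⟩, ⟨0, 0, by push_cast; ring⟩, by simp⟩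
  add_mem' := by
    rintro x y ⟨a, b, c, d, ha, hb, hc, hd, rfl⟩ ⟨a', b', c', d', ha', hb', hc', hd', rfl⟩
    exact ⟨a + a', b + b', c + c', d + d', inO_add ha ha', inO_add hb hb',
      inO_add hc hc', inO_add hd hd', by simp [add_smul]; abel⟩
  neg_mem' := by
    rintro x ⟨a, b, c, d, ha, hb, hc, hd, rfl⟩
    exact ⟨-a, -b, -c, -d, inO_neg ha, inO_neg hb, inO_neg hc, inO_neg hd,
      by simp [neg_smul]; abel⟩

/-- the additive map `x ↦ p x p̃`. -/
def conjHom (p : HR) : HR →+ HR :=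
  AddMonoidHom.mk' (fun x => p * x * twist p) (fun a b => by simp [mul_add, add_mul])

/-- the additive map `x ↦ (1/|q q̃|) · q x q̃`. -/
def cslHom (q : HR) : HR →+ HR :=
  AddMonoidHom.mk' (fun x => (1 / ‖q * twist q‖) • (q * x * twist q))
    (fun a b => by simp [mul_add, add_mul, smul_add])

/-- the subgroup `L ∩ (1/|q q̃|) · q L q̃` of `ℍ`. -/
def cslSub (q : HR) : AddSubgroup HR := Lsub ⊓ Lsub.map (cslHom q)

/-- for a rotation `R`, the subgroup `Γ ∩ R(Γ)`. -/
def cslOf (Γ : AddSubgroup HR) (R : HR ≃ₗᵢ[ℝ] HR) : AddSubgroup HR :=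
  Γ ⊓ Γ.map R.toLinearEquiv.toLinearMap.toAddMonoidHom

/-- the standard Euclidean inner product on `ℍ ≅ ℝ⁴`. -/
def dot (x y : HR) : ℝ := x.re * y.re + x.imI * y.imI + x.imJ * y.imJ + x.imK * y.imK

/-- the dual lattice `L* = {x ∈ ℍ : ⟨x|y⟩ ∈ ℤ for all y ∈ L}`. -/
def Ldual : AddSubgroup HR where
  carrier := {x | ∀ y ∈ Lsub, ∃ n : ℤ, dot x y = n}
  zero_mem' := by intro y _; exact ⟨0, by simp [dot]⟩
  add_mem' := by
    intro a b ha hb y hy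
    obtain ⟨m, hm⟩ := ha y hy; obtain ⟨n, hn⟩ := hb y hy
    refine ⟨m + n, ?_⟩
    have : dot (a + b) y = dot a y + dot b y := by simp [dot]; ring
    rw [this, hm, hn]; push_cast; ring
  neg_mem' := by
    intro a ha y hy
    obtain ⟨m, hm⟩ := ha y hy
    refine ⟨-m, ?_⟩
    have : dot (-a) y = -dot a y := by simp [dot]; ring
    rw [this, hm]; push_cast; ring

/-! ### The field `K`, its conjugation, and the ring `𝔬` -/

lemma sqrt5_sq : Real.sqrt 5 * Real.sqrt 5 = 5 := Real.mul_self_sqrt (by norm_num)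

lemma tau_sq : tau * tau = tau + 1 := by
  unfold tau
  linear_combination (1 / 4) * sqrt5_sq

lemma sqrt5_eq : Real.sqrt 5 = 2 * tau - 1 := by
  unfold tau
  ring

lemma irrational_sqrt5 : Irrational (Real.sqrt 5) := by
  have h : Nat.Prime 5 := by norm_num
  exact_mod_cast h.irrational_sqrt

lemma rat_sqrt5_unique {q r q' r' : ℚ}
    (h : (q : ℝ) + r * Real.sqrt 5 = q' + r' * Real.sqrt 5) : q = q' ∧ r = r' := by
  have hr : r = r' := by
    by_contra hne
    have hne' : (r : ℝ) - r' ≠ 0 := by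
      rw [sub_ne_zero]
      exact_mod_cast hne
    refine irrational_sqrt5 ⟨(q' - q) / (r - r'), ?_⟩
    push_cast
    rw [div_eq_iff hne']
    linarith
  subst hr
  refine ⟨?_, rfl⟩
  have : (q : ℝ) = q' := by linarith
  exact_mod_cast this

/-- `gal` does not depend on the representation chosen in its definition. -/
lemma gal_eq (q r : ℚ) : gal ((q : ℝ) + r * Real.sqrt 5) = q - r * Real.sqrt 5 := by
  have h : ∃ q' r' : ℚ, (q : ℝ) + r * Real.sqrt 5 = (q' : ℝ) + (r' : ℝ) * Real.sqrt 5 :=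
    ⟨q, r, rfl⟩
  unfold gal
  rw [dif_pos h]
  obtain ⟨h1, h2⟩ := rat_sqrt5_unique h.choose_spec.choose_spec
  exact congrArg₂ (fun x y : ℚ => (x : ℝ) - y * Real.sqrt 5) h1.symm h2.symm

lemma inK_add {x y : ℝ} (hx : inK x) (hy : inK y) : inK (x + y) := by
  obtain ⟨a, b, rfl⟩ := hx
  obtain ⟨c, d, rfl⟩ := hy
  exact ⟨a + c, b + d, by push_cast; ring⟩

lemma inK_neg {x : ℝ} (hx : inK x) : inK (-x) := by
  obtain ⟨a, b, rfl⟩ := hx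
  exact ⟨-a, -b, by push_cast; ring⟩

lemma inK_sub {x y : ℝ} (hx : inK x) (hy : inK y) : inK (x - y) := by
  rw [sub_eq_add_neg]
  exact inK_add hx (inK_neg hy)

lemma inK_mul {x y : ℝ} (hx : inK x) (hy : inK y) : inK (x * y) := by
  obtain ⟨a, b, rfl⟩ := hx
  obtain ⟨c, d, rfl⟩ := hy
  exact ⟨a * c + 5 * b * d, a * d + b * c, by
    push_cast
    linear_combination (b * d : ℝ) * sqrt5_sq⟩

lemma inK_gal {x : ℝ} (hx : inK x) : inK (gal x) := by
  obtain ⟨a, b, rfl⟩ := hx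
  exact ⟨a, -b, by rw [gal_eq]; push_cast; ring⟩

lemma gal_gal {x : ℝ} (hx : inK x) : gal (gal x) = x := by
  obtain ⟨a, b, rfl⟩ := hx
  have h := gal_eq a (-b)
  push_cast at h
  rw [gal_eq, sub_eq_add_neg, ← neg_mul, h]
  ring

lemma gal_add {x y : ℝ} (hx : inK x) (hy : inK y) : gal (x + y) = gal x + gal y := by
  obtain ⟨a, b, rfl⟩ := hx
  obtain ⟨c, d, rfl⟩ := hy
  have h := gal_eq (a + c) (b + d)
  push_cast at h
  rw [gal_eq, gal_eq, show (a + b * Real.sqrt 5 + (c + d * Real.sqrt 5) : ℝ)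
    = a + c + (b + d) * Real.sqrt 5 by ring, h]
  ring

lemma gal_sub {x y : ℝ} (hx : inK x) (hy : inK y) : gal (x - y) = gal x - gal y := by
  have h := gal_add (inK_sub hx hy) hy
  rw [sub_add_cancel] at h
  linarith

lemma gal_mul {x y : ℝ} (hx : inK x) (hy : inK y) : gal (x * y) = gal x * gal y := by
  obtain ⟨a, b, rfl⟩ := hx
  obtain ⟨c, d, rfl⟩ := hy
  have h := gal_eq (a * c + 5 * b * d) (a * d + b * c)
  push_cast at h
  rw [gal_eq, gal_eq, show ((a + b * Real.sqrt 5) * (c + d * Real.sqrt 5) : ℝ)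
    = a * c + 5 * b * d + (a * d + b * c) * Real.sqrt 5 by
      linear_combination (b * d : ℝ) * sqrt5_sq, h]
  linear_combination -(b * d : ℝ) * sqrt5_sq

lemma inO_mul {x y : ℝ} (hx : inO x) (hy : inO y) : inO (x * y) := by
  obtain ⟨a, b, rfl⟩ := hx
  obtain ⟨c, d, rfl⟩ := hy
  exact ⟨a * c + b * d, a * d + b * c + b * d, by
    push_cast
    linear_combination (b * d : ℝ) * tau_sq⟩

lemma inO_sub {x y : ℝ} (hx : inO x) (hy : inO y) : inO (x - y) := by
  rw [sub_eq_add_neg]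
  exact inO_add hx (inO_neg hy)

lemma inO_one : inO 1 := ⟨1, 0, by simp⟩

lemma inO_two : inO 2 := ⟨2, 0, by simp⟩

lemma inO_tau : inO tau := ⟨0, 1, by simp⟩

/-- Conjugation on halves of elements of `𝔬`, which is where coordinates of icosians live. -/
lemma gal_half (m n : ℤ) : gal ((m + n * tau) / 2) = (m + n - n * tau) / 2 := by
  have h := gal_eq ((2 * m + n) / 4) (n / 4)
  push_cast at h
  rw [sqrt5_eq] at h
  convert h using 1
  · congr 1
    ring
  · ring

lemma inK_half (m n : ℤ) : inK ((m + n * tau) / 2) :=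
  ⟨(2 * m + n) / 4, n / 4, by push_cast; rw [sqrt5_eq]; ring⟩

/-- The field norm of an element of `𝔬` is a rational integer. -/
lemma mul_gal_int {x : ℝ} (hx : inO x) : inK x ∧ ∃ k : ℤ, x * gal x = k := by
  obtain ⟨m, n, rfl⟩ := hx
  have e : ((m : ℝ) + n * tau) = (((2 * m : ℤ) : ℝ) + ((2 * n : ℤ) : ℝ) * tau) / 2 := by
    push_cast
    ring
  refine ⟨e ▸ inK_half _ _, m ^ 2 + m * n - n ^ 2, ?_⟩
  have h : gal ((m : ℝ) + n * tau) = m + n - n * tau := by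
    rw [e, gal_half]
    push_cast
    ring
  rw [h]
  push_cast
  linear_combination -(n ^ 2 : ℝ) * tau_sq

/-! ### The twist map -/

lemma twist_re (q : HR) : (twist q).re = gal q.re := rfl
lemma twist_imI (q : HR) : (twist q).imI = gal q.imI := rfl
lemma twist_imJ (q : HR) : (twist q).imJ = gal q.imK := rfl
lemma twist_imK (q : HR) : (twist q).imK = gal q.imJ := rfl

/-- Swapping the `j` and `k` coordinates is an anti-automorphism of `ℍ`, hence so is the twist. -/
lemma twist_mul {p q : HR} (hp : inHK p) (hq : inHK q) :
    twist (p * q) = twist q * twist p := by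
  obtain ⟨p0, p1, p2, p3⟩ := hp
  obtain ⟨q0, q1, q2, q3⟩ := hq
  ext <;> simp only [twist_re, twist_imI, twist_imJ, twist_imK, Quaternion.re_mul,
    Quaternion.imI_mul, Quaternion.imJ_mul, Quaternion.imK_mul] <;>
  simp (maxDischargeDepth := 10) only [gal_add, gal_sub, gal_mul, inK_add, inK_sub, inK_mul, p0, p1,
    p2, p3, q0, q1, q2, q3] <;> ring

lemma twist_twist {p : HR} (hp : inHK p) : twist (twist p) = p := by
  obtain ⟨p0, p1, p2, p3⟩ := hp
  ext <;> simp only [twist_re, twist_imI, twist_imJ, twist_imK, gal_gal, p0, p1, p2, p3]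

lemma inHK_mul {p q : HR} (hp : inHK p) (hq : inHK q) : inHK (p * q) := by
  obtain ⟨p0, p1, p2, p3⟩ := hp
  obtain ⟨q0, q1, q2, q3⟩ := hq
  refine ⟨?_, ?_, ?_, ?_⟩ <;> simp (maxDischargeDepth := 10) only [Quaternion.re_mul,
    Quaternion.imI_mul, Quaternion.imJ_mul, Quaternion.imK_mul, inK_add, inK_sub, inK_mul, p0, p1,
    p2, p3, q0, q1, q2, q3]

lemma inHK_twist {p : HR} (hp : inHK p) : inHK (twist p) :=
  ⟨inK_gal hp.1, inK_gal hp.2.1, inK_gal hp.2.2.2, inK_gal hp.2.2.1⟩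

lemma normSq_twist {p : HR} (hp : inHK p) :
    Quaternion.normSq (twist p) = gal (Quaternion.normSq p) := by
  obtain ⟨p0, p1, p2, p3⟩ := hp
  simp only [Quaternion.normSq_def', twist_re, twist_imI, twist_imJ, twist_imK, pow_two]
  simp (maxDischargeDepth := 10) only [gal_add, gal_mul, inK_add, inK_mul, p0, p1, p2, p3]
  ring

/-! ### The icosian ring and the lattice -/

/-- The real combination `a v₁ + b v₂ + c v₃ + d v₄`. -/
def vComb (a b c d : ℝ) : HR := a • v₁ + b • v₂ + c • v₃ + d • v₄

lemma vComb_re (a b c d : ℝ) : (vComb a b c d).re = a + c / 2 + d * (1 - tau) / 2 := by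
  change a * 1 + b * 0 + c * (1 / 2) + d * ((1 - tau) / 2) = _
  ring

lemma vComb_imI (a b c d : ℝ) : (vComb a b c d).imI = b + c / 2 + d * tau / 2 := by
  change a * 0 + b * 1 + c * (1 / 2) + d * (tau / 2) = _
  ring

lemma vComb_imJ (a b c d : ℝ) : (vComb a b c d).imJ = c / 2 := by
  change a * 0 + b * 0 + c * (1 / 2) + d * 0 = _
  ring

lemma vComb_imK (a b c d : ℝ) : (vComb a b c d).imK = c / 2 + d / 2 := by
  change a * 0 + b * 0 + c * (1 / 2) + d * (1 / 2) = _
  ring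

/-- The icosian with `𝔬`-coordinates `a + a'τ`, `b + b'τ`, `c + c'τ`, `d + d'τ` relative to the basis
`v₁, v₂, v₃, v₄` of `𝕀`. -/
def icos (a a' b b' c c' d d' : ℤ) : HR :=
  vComb (a + a' * tau) (b + b' * tau) (c + c' * tau) (d + d' * tau)

section coords

variable (a a' b b' c c' d d' : ℤ)

lemma icos_re : (icos a a' b b' c c' d d').re =
    ((2 * a + c + d - d' : ℤ) + (2 * a' + c' - d : ℤ) * tau) / 2 := by
  rw [icos, vComb_re]
  push_cast
  linear_combination -(d' / 2 : ℝ) * tau_sq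

lemma icos_imI : (icos a a' b b' c c' d d').imI =
    ((2 * b + c + d' : ℤ) + (2 * b' + c' + d + d' : ℤ) * tau) / 2 := by
  rw [icos, vComb_imI]
  push_cast
  linear_combination (d' / 2 : ℝ) * tau_sq

lemma icos_imJ : (icos a a' b b' c c' d d').imJ = ((c : ℤ) + (c' : ℤ) * tau) / 2 := by
  rw [icos, vComb_imJ]

lemma icos_imK : (icos a a' b b' c c' d d').imK =
    ((c + d : ℤ) + (c' + d' : ℤ) * tau) / 2 := by
  rw [icos, vComb_imK]
  push_cast
  ring

end coords

lemma icosian_iff {q : HR} :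
    inIcosian q ↔ ∃ a a' b b' c c' d d' : ℤ, q = icos a a' b b' c c' d d' := by
  constructor
  · rintro ⟨_, _, _, _, ⟨a, a', rfl⟩, ⟨b, b', rfl⟩, ⟨c, c', rfl⟩, ⟨d, d', rfl⟩, rfl⟩
    exact ⟨a, a', b, b', c, c', d, d', rfl⟩
  · rintro ⟨a, a', b, b', c, c', d, d', rfl⟩
    exact ⟨_, _, _, _, ⟨a, a', rfl⟩, ⟨b, b', rfl⟩, ⟨c, c', rfl⟩, ⟨d, d', rfl⟩, rfl⟩

lemma inHK_of_icosian {q : HR} (hq : inIcosian q) : inHK q := by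
  obtain ⟨a, a', b, b', c, c', d, d', rfl⟩ := icosian_iff.1 hq
  rw [inHK, icos_re, icos_imI, icos_imJ, icos_imK]
  exact ⟨inK_half _ _, inK_half _ _, inK_half _ _, inK_half _ _⟩

lemma icosian_twist {q : HR} (hq : inIcosian q) : inIcosian (twist q) := by
  obtain ⟨a, a', b, b', c, c', d, d', rfl⟩ := icosian_iff.1 hq
  -- The twist fixes `v₁, v₂, v₃` and sends `v₄` to `v₃ - v₄`.
  refine icosian_iff.2 ⟨a + a', -a', b + b', -b', c + c' + d + d', -c' - d', -d - d', d', ?_⟩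
  ext <;> simp only [twist_re, twist_imI, twist_imJ, twist_imK, icos_re, icos_imI, icos_imJ,
    icos_imK, gal_half] <;> push_cast <;> ring

/-- The coefficients come from the multiplication table of `v₁, v₂, v₃, v₄`. -/
lemma icosian_mul {p q : HR} (hp : inIcosian p) (hq : inIcosian q) : inIcosian (p * q) := by
  obtain ⟨a, b, c, d, ha, hb, hc, hd, rfl⟩ := hp
  obtain ⟨e, f, g, k, he, hf, hg, hk, rfl⟩ := hq
  refine ⟨a * e - b * f + (tau - 1) * (b * g) - tau * (c * f) - c * g - c * k - tau * (d * f)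
      - d * k,
    a * f + b * e + (1 - tau) * (b * g) + (1 - tau) * (b * k) + tau * (c * f) + c * k - d * g,
    a * g + c * e - b * g - b * k + c * f + c * g + d * f + (1 - tau) * (d * g),
    a * k + d * e + 2 * (b * g) + b * k - 2 * (c * f) + (1 - tau) * (c * k) - d * f
      + tau * (d * g) + (1 - tau) * (d * k), ?_, ?_, ?_, ?_, ?_⟩
  · simp (maxDischargeDepth := 20) only [inO_add, inO_sub, inO_mul, inO_one, inO_tau, *]
  · simp (maxDischargeDepth := 20) only [inO_add, inO_sub, inO_mul, inO_one, inO_tau, *]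
  · simp (maxDischargeDepth := 20) only [inO_add, inO_sub, inO_mul, inO_one, inO_tau, *]
  · simp (maxDischargeDepth := 20) only [inO_add, inO_sub, inO_mul, inO_one, inO_two, inO_tau, *]
  · have ht := tau_sq
    change vComb _ _ _ _ * vComb _ _ _ _ = vComb _ _ _ _
    ext <;>
    simp only [vComb_re, vComb_imI, vComb_imJ, vComb_imK, Quaternion.re_mul, Quaternion.imI_mul,
      Quaternion.imJ_mul, Quaternion.imK_mul] <;> grind

/-- The coefficients are those of the Gram matrix of `v₁, v₂, v₃, v₄`. -/
lemma inO_normSq {q : HR} (hq : inIcosian q) : inO (Quaternion.normSq q) := by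
  obtain ⟨a, b, c, d, ha, hb, hc, hd, rfl⟩ := hq
  have e : Quaternion.normSq (vComb a b c d) =
      a * a + b * b + c * c + d * d + a * c + (1 - tau) * (a * d) + b * c + tau * (b * d)
        + c * d := by
    simp only [Quaternion.normSq_def', vComb_re, vComb_imI, vComb_imJ, vComb_imK]
    linear_combination (d ^ 2 / 2) * tau_sq
  change inO (Quaternion.normSq (vComb a b c d))
  rw [e]
  simp (maxDischargeDepth := 20) only [inO_add, inO_sub, inO_mul, inO_one, inO_tau, *]

/-- The integer combination `a w₁ + b w₂ + c w₃ + d w₄`. -/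
def latt (a b c d : ℤ) : HR := a • w₁ + b • w₂ + c • w₃ + d • w₄

lemma latt_re (a b c d : ℤ) : (latt a b c d).re = ((2 * a - b : ℤ) + (0 : ℤ) * tau) / 2 := by
  have : (latt a b c d).re = a • (1 : ℝ) + b • (-(1 / 2) : ℝ) + c • (0 : ℝ) + d • (0 : ℝ) := rfl
  rw [this]
  simp only [zsmul_eq_mul]
  push_cast
  ring

lemma latt_imI (a b c d : ℤ) :
    (latt a b c d).imI = ((b - 2 * c + d : ℤ) + (0 : ℤ) * tau) / 2 := by
  have : (latt a b c d).imI = a • (0 : ℝ) + b • (1 / 2 : ℝ) + c • (-1 : ℝ) + d • (1 / 2 : ℝ) := rfl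
  rw [this]
  simp only [zsmul_eq_mul]
  push_cast
  ring

lemma latt_imJ (a b c d : ℤ) : (latt a b c d).imJ = ((b - d : ℤ) + (d : ℤ) * tau) / 2 := by
  have : (latt a b c d).imJ =
      a • (0 : ℝ) + b • (1 / 2 : ℝ) + c • (0 : ℝ) + d • ((tau - 1) / 2 : ℝ) := rfl
  rw [this]
  simp only [zsmul_eq_mul]
  push_cast
  ring

lemma latt_imK (a b c d : ℤ) : (latt a b c d).imK = ((b : ℤ) + (-d : ℤ) * tau) / 2 := by
  have : (latt a b c d).imK =
      a • (0 : ℝ) + b • (1 / 2 : ℝ) + c • (0 : ℝ) + d • (-(tau / 2) : ℝ) := rfl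
  rw [this]
  simp only [zsmul_eq_mul]
  push_cast
  ring

lemma mem_Lsub {x : HR} : x ∈ Lsub ↔ ∃ a b c d : ℤ, x = latt a b c d := by
  unfold Lsub latt
  simp only [Submodule.mem_toAddSubgroup, Submodule.mem_span_insert, Submodule.mem_span_singleton]
  constructor
  · rintro ⟨a, _, ⟨b, _, ⟨c, _, ⟨d, rfl⟩, rfl⟩, rfl⟩, rfl⟩
    exact ⟨a, b, c, d, by abel⟩
  · rintro ⟨a, b, c, d, rfl⟩
    exact ⟨a, _, ⟨b, _, ⟨c, _, ⟨d, rfl⟩, rfl⟩, rfl⟩, by abel⟩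

lemma int_tau_unique {m n m' n' : ℤ}
    (h : ((m : ℝ) + n * tau) / 2 = (m' + n' * tau) / 2) : m = m' ∧ n = n' := by
  have := @rat_sqrt5_unique (m + n / 2) (n / 2) (m' + n' / 2) (n' / 2) (by
    push_cast
    rw [sqrt5_eq]
    linear_combination 2 * h)
  obtain ⟨h1, h2⟩ := this
  have hn : (n : ℚ) = n' := by linarith
  have hm : (m : ℚ) = m' := by linarith
  exact ⟨by exact_mod_cast hm, by exact_mod_cast hn⟩

/-- `L` is the set of twist-fixed icosians. -/
lemma mem_Lsub_iff {x : HR} : x ∈ Lsub ↔ inIcosian x ∧ twist x = x := by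
  rw [mem_Lsub]
  constructor
  · rintro ⟨a, b, c, d, rfl⟩
    constructor
    · -- `w₁ = v₁`, `w₂ = v₃ - v₁`, `w₃ = -v₂`,
      -- `w₄ = -v₁ + 2v₂ + (τ - 1)v₃ + (1 - 2τ)v₄`.
      refine icosian_iff.2 ⟨a - b - d, 0, -c + 2 * d, 0, b - d, d, d, -2 * d, ?_⟩
      ext <;> simp only [icos_re, icos_imI, icos_imJ, icos_imK, latt_re, latt_imI, latt_imJ,
        latt_imK] <;> push_cast <;> ring
    · ext <;> simp only [twist_re, twist_imI, twist_imJ, twist_imK, latt_re, latt_imI, latt_imJ,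
        latt_imK, gal_half] <;> push_cast <;> ring
  · rintro ⟨hx, h⟩
    obtain ⟨a, a', b, b', c, c', d, d', rfl⟩ := icosian_iff.1 hx
    have h0 := congrArg (fun q : HR => q.re) h
    have h1 := congrArg (fun q : HR => q.imI) h
    have h2 := congrArg (fun q : HR => q.imJ) h
    simp only [twist_re, twist_imI, twist_imJ, icos_re, icos_imI, icos_imJ, icos_imK,
      gal_half] at h0 h1 h2
    obtain ⟨-, e0⟩ := @int_tau_unique (2 * a + c + d - d' + (2 * a' + c' - d))
      (-(2 * a' + c' - d)) (2 * a + c + d - d') (2 * a' + c' - d)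
      (by push_cast at h0 ⊢; linear_combination h0)
    obtain ⟨-, e1⟩ := @int_tau_unique (2 * b + c + d' + (2 * b' + c' + d + d'))
      (-(2 * b' + c' + d + d')) (2 * b + c + d') (2 * b' + c' + d + d')
      (by push_cast at h1 ⊢; linear_combination h1)
    obtain ⟨e2, e3⟩ := @int_tau_unique (c + d + (c' + d')) (-(c' + d')) c c'
      (by push_cast at h2 ⊢; linear_combination h2)
    -- Fixedness amounts to `a' = b' = 0`, `d = c'` and `d' = -2c'`.
    obtain rfl : d = c' := by omega
    obtain rfl : d' = -2 * d := by omega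
    obtain rfl : a' = 0 := by omega
    obtain rfl : b' = 0 := by omega
    refine ⟨a + c + 2 * d, c + d, -b + 2 * d, d, ?_⟩
    ext <;> simp only [icos_re, icos_imI, icos_imJ, icos_imK, latt_re, latt_imI, latt_imJ,
      latt_imK] <;> push_cast <;> ring

lemma one_mem_Lsub : (1 : HR) ∈ Lsub := by
  refine mem_Lsub.2 ⟨1, 0, 0, 0, ?_⟩
  ext <;> simp [latt_re, latt_imI, latt_imJ, latt_imK]

lemma norm_mul_twist_sq {q : HR} (hq : inIcosian q) :
    ∃ k : ℤ, ‖q * twist q‖ ^ 2 = k := by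
  obtain ⟨-, k, hk⟩ := mul_gal_int (inO_normSq hq)
  refine ⟨k, ?_⟩
  rw [← hk, ← normSq_twist (inHK_of_icosian hq), norm_mul, mul_pow,
    Quaternion.normSq_eq_norm_mul_self, Quaternion.normSq_eq_norm_mul_self]
  ring

/-- `‖q q̃‖²` is a nonnegative rational integer on `𝕀` and multiplicative, so it is `1` on units. -/
lemma norm_mul_twist_of_unit {p q : HR} (hp : inIcosian p) (hq : inIcosian q) (h : p * q = 1) :
    ‖p * twist p‖ = 1 := by
  obtain ⟨k, hk⟩ := norm_mul_twist_sq hp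
  obtain ⟨l, hl⟩ := norm_mul_twist_sq hq
  have h1 : ‖p‖ * ‖q‖ = 1 := by rw [← norm_mul, h, norm_one]
  have h2 : ‖twist q‖ * ‖twist p‖ = 1 := by
    rw [← norm_mul, ← twist_mul (inHK_of_icosian hp) (inHK_of_icosian hq), h]
    rw [(mem_Lsub_iff.1 one_mem_Lsub).2, norm_one]
  have hkl : k * l = 1 := by
    have : (k : ℝ) * l = 1 := by
      rw [← hk, ← hl, norm_mul, norm_mul]
      calc _ = (‖p‖ * ‖q‖) ^ 2 * (‖twist q‖ * ‖twist p‖) ^ 2 := by ring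
        _ = 1 := by rw [h1, h2]; norm_num
    exact_mod_cast this
  have hk0 : 0 ≤ k := by
    have : (0 : ℝ) ≤ k := hk ▸ sq_nonneg _
    exact_mod_cast this
  have hk1 : k = 1 := Int.eq_one_of_mul_eq_one_right hk0 hkl
  rw [hk1, Int.cast_one] at hk
  nlinarith [norm_nonneg (p * twist p)]

/-! ### Comparison of the coincidence site lattices -/

lemma csl_subset {r s : HR} (hs : inIcosian s)
    (h : (fun x => r * x) '' {x : HR | inIcosian x} =
         (fun x => s * x) '' {x : HR | inIcosian x}) :
    {z : HR | z ∈ Lsub ∧ ∃ x ∈ Lsub, z = (1 / ‖r * twist r‖) • (r * x * twist r)} ⊆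
    {z : HR | z ∈ Lsub ∧ ∃ x ∈ Lsub, z = (1 / ‖s * twist s‖) • (s * x * twist s)} := by
  have h1 : inIcosian 1 := (mem_Lsub_iff.1 one_mem_Lsub).1
  obtain ⟨ε, hε, hrs⟩ : ∃ ε, inIcosian ε ∧ s * ε = r := by
    have : r ∈ (fun x => s * x) '' {x : HR | inIcosian x} := h ▸ ⟨1, h1, mul_one r⟩
    exact this
  obtain ⟨η, hη, hsr⟩ : ∃ η, inIcosian η ∧ r * η = s := by
    have : s ∈ (fun x => r * x) '' {x : HR | inIcosian x} := h ▸ ⟨1, h1, mul_one s⟩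
    exact this
  rintro z ⟨hz, x, hx, rfl⟩
  refine ⟨hz, ?_⟩
  by_cases hs0 : s = 0
  · have hr0 : r = s := by rw [← hrs, hs0, zero_mul]
    exact ⟨x, hx, by rw [hr0]⟩
  have hunit : ε * η = 1 := by
    apply mul_left_cancel₀ hs0
    rw [← mul_assoc, hrs, hsr, mul_one]
  have hnorm := norm_mul_twist_of_unit hε hη hunit
  have kε := inHK_of_icosian hε
  have ks := inHK_of_icosian hs
  obtain ⟨hxI, hxt⟩ := mem_Lsub_iff.1 hx
  have kx := inHK_of_icosian hxI
  have htw : twist r = twist ε * twist s := by rw [← hrs, twist_mul ks kε]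
  refine ⟨ε * x * twist ε, mem_Lsub_iff.2 ⟨icosian_mul (icosian_mul hε hxI) (icosian_twist hε), ?_⟩,
    ?_⟩
  · rw [twist_mul (inHK_mul kε kx) (inHK_twist kε), twist_mul kε kx, twist_twist kε, hxt, mul_assoc]
  · have hn : ‖r * twist r‖ = ‖s * twist s‖ := by
      rw [htw, ← hrs, norm_mul, norm_mul, norm_mul, norm_mul]
      rw [norm_mul] at hnorm
      linear_combination ‖s‖ * ‖twist s‖ * hnorm
    rw [hn, htw, ← hrs]
    simp only [mul_assoc]

/-- `𝕀`-primitive admissible icosians `r, s` with `r𝕀 = s𝕀`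
determine the same CSL. -/
theorem csl_depends_only_on_right_ideal (r s : HR)
    (hr : IPrimitive r) (hs : IPrimitive s)
    (har : Admissible r) (has : Admissible s)
    (h : (fun x => r * x) '' {x : HR | inIcosian x} =
         (fun x => s * x) '' {x : HR | inIcosian x}) :
    {z : HR | z ∈ Lsub ∧ ∃ x ∈ Lsub, z = (1 / ‖r * twist r‖) • (r * x * twist r)} =
    {z : HR | z ∈ Lsub ∧ ∃ x ∈ Lsub, z = (1 / ‖s * twist s‖) • (s * x * twist s)} := by
  exact subset_antisymm (csl_subset hs.1 h) (csl_subset hr.1 h.symm)
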